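/- Assume Assumption A. Let Y be a process whose trajectories are continuous w.i.e. (that is, the set of (t,ω) ∈ [0,∞)×Ω such that the trajectory s ↦ Y_s(ω) is real and continuous at the point t is instantly enforceable), let τ: Ω → [0,+∞] be an 𝔽-stopping time and let F be a closed subset of ℝ. Then ρ(ω) := inf{t ≥ τ(ω) : Y_t(ω) ∈ F} (with inf∅ = +∞) is an 𝔽-stopping time. If moreover for each ω with τ(ω) < +∞ the value Y_{τ(ω)}(ω) is an isolated point of F, then σ(ω) := inf{t > τ(ω) : Y_t(ω) ∈ F∖{Y_{τ(ω)}(ω)}} is also an 𝔽-stopping time. -/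

import Mathlib

open MeasureTheory Filter Set
open scoped ENNReal NNReal Topology

noncomputable section

namespace ModelFreeBDG

/-- A martingale space: a filtration `F` on `Ω` (with `F 0` trivial) together with
finitely many basic continuous martingales `S j`, each adapted with all trajectories
continuous.  Time is indexed by `ℝ≥0`. -/
structure MartingaleSpace (Ω : Type*) where
  F : ℝ≥0 → MeasurableSpace Ω
  mono : Monotone F
  F0_trivial : F 0 = ⊥
  d : ℕ
  S : Fin d → ℝ≥0 → Ω → ℝ
  S_adapted : ∀ j t, Measurable[F t] fun ω => S j t ω
  S_cont : ∀ j ω, Continuous fun t => S j t ω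

variable {Ω : Type*}

/-- A stopping time w.r.t. the filtration of `M`, with values in `[0,∞]`. -/
def MartingaleSpace.IsStoppingTime (M : MartingaleSpace Ω) (τ : Ω → ℝ≥0∞) : Prop :=
  ∀ t : ℝ≥0, MeasurableSet[M.F t] {ω | τ ω ≤ (t : ℝ≥0∞)}

/-- `g` is measurable with respect to the σ-field `F_τ` generated by the stopping time `τ`. -/
def MartingaleSpace.MeasStopped (M : MartingaleSpace Ω) (τ : Ω → ℝ≥0∞) (g : Ω → ℝ) : Prop :=
  ∀ B : Set ℝ, MeasurableSet B → ∀ t : ℝ≥0,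
    MeasurableSet[M.F t] {ω | g ω ∈ B ∧ τ ω ≤ (t : ℝ≥0∞)}

/-- A proper sequence of stopping times: nondecreasing, starting from `0`, and on each path
either divergent to `+∞` or eventually constant. -/
structure ProperSeq (M : MartingaleSpace Ω) where
  τ : ℕ → Ω → ℝ≥0∞
  stopping : ∀ n, M.IsStoppingTime (τ n)
  mono : ∀ ω, Monotone fun n => τ n ω
  zero : ∀ ω, τ 0 ω = 0
  proper : ∀ ω, Tendsto (fun n => τ n ω) atTop (𝓝 ⊤) ∨ ∃ n, ∀ m, n ≤ m → τ m ω = τ n ω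

/-- A simple trading strategy. -/
structure SimpleStrategy (M : MartingaleSpace Ω) where
  c : ℝ
  τ : ProperSeq M
  g : ℕ → Ω → ℝ
  g_bdd : ∀ n, ∃ C : ℝ, ∀ ω, |g n ω| ≤ C
  g_meas : ∀ n, M.MeasStopped (τ.τ n) (g n)
  g_top : ∀ n ω, τ.τ n ω = ⊤ → g n ω = 0

/-- `τ(ω) ∧ t`, as an element of `ℝ≥0`. -/
def stopMin (τ : Ω → ℝ≥0∞) (t : ℝ≥0) (ω : Ω) : ℝ≥0 :=
  (min (τ ω) (t : ℝ≥0∞)).toNNReal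

/-- The simple integral `(G·X)_t = c + Σ_{n≥1} g_{n-1}(X_{τ_n∧t} - X_{τ_{n-1}∧t})` for a
real process `X`. -/
def SimpleStrategy.integral {M : MartingaleSpace Ω} (G : SimpleStrategy M)
    (X : ℝ≥0 → Ω → ℝ) (t : ℝ≥0) (ω : Ω) : ℝ :=
  G.c + ∑' n : ℕ,
    G.g n ω * (X (stopMin (G.τ.τ (n + 1)) t ω) ω - X (stopMin (G.τ.τ n) t ω) ω)

/-- A simple capital process: a finite sum `Σ_{j} (G^j · S^j)` over simple trading strategies. -/
def IsSimpleCapital (M : MartingaleSpace Ω) (X : ℝ≥0 → Ω → ℝ) : Prop :=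
  ∃ G : Fin M.d → SimpleStrategy M, ∀ t ω, X t ω = ∑ j, (G j).integral (M.S j) t ω

/-- The class `𝓒` of nonnegative supermartingales: the smallest class of `[-∞,∞]`-valued
processes containing all nonnegative simple capital processes, closed under adding a simple
capital process whenever the sum stays nonnegative, and closed under pointwise `liminf`. -/
inductive IsNonnegSupermart (M : MartingaleSpace Ω) : (ℝ≥0 → Ω → EReal) → Prop
  | simple (X : ℝ≥0 → Ω → ℝ) (hX : IsSimpleCapital M X) (hpos : ∀ t ω, 0 ≤ X t ω) :
      IsNonnegSupermart M fun t ω => (X t ω : EReal)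
  | add (X : ℝ≥0 → Ω → EReal) (Y : ℝ≥0 → Ω → ℝ) (hX : IsNonnegSupermart M X)
      (hY : IsSimpleCapital M Y) (hpos : ∀ t ω, 0 ≤ X t ω + (Y t ω : EReal)) :
      IsNonnegSupermart M fun t ω => X t ω + (Y t ω : EReal)
  | liminf (Xs : ℕ → ℝ≥0 → Ω → EReal) (hXs : ∀ n, IsNonnegSupermart M (Xs n)) :
      IsNonnegSupermart M fun t ω => Filter.liminf (fun n => Xs n t ω) atTop

/-- The upper expectation `Ē Y` of a generalized process `Y`: the infimum of the (deterministic)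
initial values of nonnegative supermartingales dominating `Y`. -/
def upperExp (M : MartingaleSpace Ω) (Y : ℝ≥0 → Ω → EReal) : EReal :=
  sInf {x : EReal | ∃ X, IsNonnegSupermart M X ∧ (∀ ω, X 0 ω = x) ∧
    ∀ t ω, Y t ω ≤ X t ω}

/-- The outer measure `P̄ A := Ē 1_A` of a set of pairs `(t, ω)`. -/
def upperProb (M : MartingaleSpace Ω) (A : Set (ℝ≥0 × Ω)) : EReal :=
  upperExp M fun t ω => A.indicator (fun _ => (1 : EReal)) (t, ω)

/-- A set `E ⊆ [0,∞) × Ω` is instantly enforceable if some nonnegative supermartingale with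
initial value `1` becomes `+∞` outside of `E`. -/
def InstantlyEnforceable (M : MartingaleSpace Ω) (E : Set (ℝ≥0 × Ω)) : Prop :=
  ∃ X, IsNonnegSupermart M X ∧ (∀ ω, X 0 ω = 1) ∧
    ∀ t ω, (t, ω) ∉ E → X t ω = ⊤

/-- A set is instantly blockable iff its complement is instantly enforceable. -/
def InstantlyBlockable (M : MartingaleSpace Ω) (B : Set (ℝ≥0 × Ω)) : Prop :=
  InstantlyEnforceable M Bᶜ

/-- Assumption A: for any `t ≥ 0` and any instantly blockable set `B`, the projection of
`B ∩ ([0,t] × Ω)` onto `Ω` belongs to `F t`. -/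
def AssumptionA (M : MartingaleSpace Ω) : Prop :=
  ∀ (t : ℝ≥0) (B : Set (ℝ≥0 × Ω)), InstantlyBlockable M B →
    MeasurableSet[M.F t] {ω | ∃ s : ℝ≥0, s ≤ t ∧ (s, ω) ∈ B}

/-- The values of `X` are real w.i.e. -/
def RealWIE (M : MartingaleSpace Ω) (X : ℝ≥0 → Ω → EReal) : Prop :=
  InstantlyEnforceable M {p : ℝ≥0 × Ω | ∃ r : ℝ, X p.1 p.2 = (r : EReal)}

/-- The set of `(t,ω)` where `sup_{s ∈ [0,t]} |X_s(ω) - X^n_s(ω)| → 0` as `n → ∞`. -/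
def unifConvSet (Xn : ℕ → ℝ≥0 → Ω → EReal) (X : ℝ≥0 → Ω → EReal) : Set (ℝ≥0 × Ω) :=
  {p | Tendsto (fun n => ⨆ s ∈ Icc (0 : ℝ≥0) p.1, (X s p.2 - Xn n s p.2).abs)
    atTop (𝓝 (0 : ℝ≥0∞))}

/-- The class `𝓜` of martingales: the smallest class of adapted, real w.i.e. processes
containing all simple capital processes and closed under locally uniform limits w.i.e. -/
inductive IsMartingale (M : MartingaleSpace Ω) : (ℝ≥0 → Ω → EReal) → Prop
  | simple (X : ℝ≥0 → Ω → ℝ) (hX : IsSimpleCapital M X) :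
      IsMartingale M fun t ω => (X t ω : EReal)
  | lim (Xn : ℕ → ℝ≥0 → Ω → EReal) (X : ℝ≥0 → Ω → EReal)
      (hXn : ∀ n, IsMartingale M (Xn n))
      (hadapted : ∀ t, Measurable[M.F t] (X t))
      (hreal : RealWIE M X)
      (hconv : InstantlyEnforceable M (unifConvSet Xn X)) :
      IsMartingale M X

/-- `X_{τ ∧ t}(ω)`. -/
def stopVal (X : ℝ≥0 → Ω → EReal) (τ : Ω → ℝ≥0∞) (t : ℝ≥0) (ω : Ω) : EReal :=
  X (stopMin τ t ω) ω

/-- The simple quadratic variation `[X]^τ_t := Σ_{n≥1} (X_{τ_n∧t} - X_{τ_{n-1}∧t})²`,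
as an element of `[0,∞]`. -/
def sqVarAlong (X : ℝ≥0 → Ω → EReal) (τ : ℕ → Ω → ℝ≥0∞) (t : ℝ≥0) (ω : Ω) : ℝ≥0∞ :=
  ∑' n : ℕ, ((stopVal X (τ (n + 1)) t ω - stopVal X (τ n) t ω) ^ 2).abs

/-- `Y^{τ,*}_t := sup_n |Y_{τ_n ∧ t}|`, as an element of `[0,∞]`. -/
def supAlong (Y : ℝ≥0 → Ω → EReal) (τ : ℕ → Ω → ℝ≥0∞) (t : ℝ≥0) (ω : Ω) : ℝ≥0∞ :=
  ⨆ n : ℕ, (stopVal Y (τ n) t ω).abs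

/-- The supremum process `Y^*_t := sup_{0 ≤ s ≤ t} |Y_s|`, as an element of `[0,∞]`. -/
def supProc (Y : ℝ≥0 → Ω → EReal) (t : ℝ≥0) (ω : Ω) : ℝ≥0∞ :=
  ⨆ s ∈ Icc (0 : ℝ≥0) t, (Y s ω).abs

/-- The hitting time `σ(X,c) := inf {t ≥ 0 : |X_t| ≥ c}`. -/
def hitting (X : ℝ≥0 → Ω → EReal) (c : ℝ) (ω : Ω) : ℝ≥0∞ :=
  ⨅ t ∈ {t : ℝ≥0 | ENNReal.ofReal c ≤ (X t ω).abs}, (t : ℝ≥0∞)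

/-- The oscillation of the trajectory of `X` on `[a,b]`. -/
def oscOn (X : ℝ≥0 → Ω → EReal) (a b : ℝ≥0) (ω : Ω) : EReal :=
  (⨆ s ∈ Icc a b, X s ω) - ⨅ s ∈ Icc a b, X s ω

/-- The set of `(t,ω)` on which the sequence `σ` finely covers `X` with accuracy `δ`:
only finitely many `σ_n(ω) ≤ t`, and the oscillation of `X(ω)` on each interval
`[σ_n(ω)∧t, σ_{n+1}(ω)∧t]` is at most `δ`. -/
def fineCoverSet (σ : ℕ → Ω → ℝ≥0∞) (X : ℝ≥0 → Ω → EReal) (δ : ℝ) : Set (ℝ≥0 × Ω) :=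
  {p | {n : ℕ | σ n p.2 ≤ (p.1 : ℝ≥0∞)}.Finite ∧
    ∀ n, oscOn X (stopMin (σ n) p.1 p.2) (stopMin (σ (n + 1)) p.1 p.2) p.2 ≤ (δ : EReal)}

/-- `σ` is a fine cover of `X` with accuracy `δ` on the set `E`. -/
def FinelyCoversOn (M : MartingaleSpace Ω) (σ : ℕ → Ω → ℝ≥0∞) (X : ℝ≥0 → Ω → EReal)
    (δ : ℝ) (E : Set (ℝ≥0 × Ω)) : Prop :=
  (∀ n, M.IsStoppingTime (σ n)) ∧ (∀ ω, Monotone fun n => σ n ω) ∧ (∀ ω, σ 0 ω = 0) ∧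
    E ⊆ fineCoverSet σ X δ

/-- `σ` is a fine cover of `X` with accuracy `δ` w.i.e. -/
def ProperSeq.FinelyCoversWIE {M : MartingaleSpace Ω} (σ : ProperSeq M)
    (X : ℝ≥0 → Ω → EReal) (δ : ℝ) : Prop :=
  InstantlyEnforceable M (fineCoverSet σ.τ X δ)

/-- The set of `(t,ω)` on which `sup_{s ∈ [0, σ(ω) ∧ t]} |Y^m_s(ω) - Y_s(ω)| → 0`, i.e.
locally uniform convergence on the random interval `[0,σ]∖{+∞}`. -/
def convWithinSet (Ym : ℕ → ℝ≥0 → Ω → EReal) (Y : ℝ≥0 → Ω → EReal) (σ : Ω → ℝ≥0∞) :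
    Set (ℝ≥0 × Ω) :=
  {p | Tendsto (fun m => ⨆ s ∈ Icc (0 : ℝ≥0) (stopMin σ p.1 p.2),
    (Ym m s p.2 - Y s p.2).abs) atTop (𝓝 (0 : ℝ≥0∞))}

/-- The set of `(t,ω)` on which `sup_{s ∈ [0,t]} |Y^m_s(ω) - Y_s(ω)| → 0`, i.e. locally
uniform convergence. -/
def locUnifConvSet (Ym : ℕ → ℝ≥0 → Ω → EReal) (Y : ℝ≥0 → Ω → EReal) : Set (ℝ≥0 × Ω) :=
  {p | Tendsto (fun m => ⨆ s ∈ Icc (0 : ℝ≥0) p.1, (Ym m s p.2 - Y s p.2).abs)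
    atTop (𝓝 (0 : ℝ≥0∞))}

/-- `Q` is a quadratic variation of `X`: a real continuous adapted process such that, for every
summable sequence of positive accuracies `δ_m` and every sequence of proper sequences of
stopping times `σ^m` finely covering `X` with accuracy `δ_m` w.i.e., and every `c > 0`, the
simple quadratic variations `[X]^{σ^m}` converge locally uniformly on `[0, σ(X,c)]∖{+∞}`
w.i.e. to `Q`. -/
structure IsQuadVar (M : MartingaleSpace Ω) (X : ℝ≥0 → Ω → EReal) (Q : ℝ≥0 → Ω → ℝ) :
    Prop where
  adapted : ∀ t, Measurable[M.F t] (Q t)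
  cont : ∀ ω, Continuous fun t => Q t ω
  conv : ∀ δ : ℕ → ℝ, (∀ m, 0 < δ m) → Summable δ →
    ∀ σ : ℕ → ProperSeq M, (∀ m, (σ m).FinelyCoversWIE X (δ m)) →
    ∀ c : ℝ, 0 < c →
      InstantlyEnforceable M (convWithinSet
        (fun m t ω => ((sqVarAlong X (σ m).τ t ω : ℝ≥0∞) : EReal))
        (fun t ω => ((Q t ω : ℝ) : EReal)) (hitting X c))

open Classical in
/-- The Lebesgue–Stieltjes measure on `ℝ` associated with a monotone continuous function
(and the zero measure otherwise). -/
def lsMeasure (a : ℝ → ℝ) : Measure ℝ :=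
  if h : Monotone a ∧ Continuous a then
    StieltjesFunction.measure ⟨a, h.1, fun _ => h.2.continuousWithinAt⟩
  else 0

/-- The pathwise Lebesgue–Stieltjes integral `∫_0^t g dа` for functions on `ℝ≥0`. -/
def lsInt (g : ℝ≥0 → ℝ) (a : ℝ≥0 → ℝ) (t : ℝ≥0) : ℝ :=
  ∫ s in Ioc (0 : ℝ) (t : ℝ), g s.toNNReal ∂(lsMeasure fun s => a s.toNNReal)

/-- The pathwise Lebesgue–Stieltjes integral `∫_0^t g d(¼ Qp − ¼ Qm)`, i.e. the integral
with respect to a quadratic covariation `[X,Y] = ¼[X+Y] − ¼[X−Y]`. -/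
def covIntegral (g : ℝ≥0 → ℝ) (Qp Qm : ℝ≥0 → ℝ) (t : ℝ≥0) : ℝ :=
  (1 / 4 : ℝ) * lsInt g Qp t - (1 / 4 : ℝ) * lsInt g Qm t

/-- The step process associated with a simple trading strategy:
`G_t = Σ_{n≥1} g_{n-1} 1_{[τ_{n-1}, τ_n)}(t)`. -/
def SimpleStrategy.step {M : MartingaleSpace Ω} (G : SimpleStrategy M) (t : ℝ≥0) (ω : Ω) :
    ℝ :=
  ∑' n : ℕ, ({t' : ℝ≥0 | G.τ.τ n ω ≤ (t' : ℝ≥0∞) ∧ (t' : ℝ≥0∞) < G.τ.τ (n + 1) ω}).indicator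
    (fun _ => G.g n ω) t

/-- The simple integral `(G·X)` of a simple trading strategy against an `EReal`-valued
process. -/
def SimpleStrategy.integralE {M : MartingaleSpace Ω} (G : SimpleStrategy M)
    (X : ℝ≥0 → Ω → EReal) (t : ℝ≥0) (ω : Ω) : EReal :=
  (G.c : EReal) + ∑' n : ℕ,
    (G.g n ω : EReal) * (stopVal X (G.τ.τ (n + 1)) t ω - stopVal X (G.τ.τ n) t ω)

/-- Membership in the space `𝓡` of generalized processes whose trajectories are Borel
measurable and real on every interval `[0,t]` w.i.e. -/
def MemR (M : MartingaleSpace Ω) (G : ℝ≥0 → Ω → EReal) : Prop :=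
  InstantlyEnforceable M {p : ℝ≥0 × Ω |
    (∀ s ∈ Icc (0 : ℝ≥0) p.1, ∃ r : ℝ, G s p.2 = (r : EReal)) ∧
    Measurable ((Icc (0 : ℝ≥0) p.1).restrict fun s => G s p.2)}

/-- The pseudo-distance `d_{∞,X,loc}(Y,Z) := Σ_{N≥1} 2^{-N} Ē((Y−Z)^*_{·∧σ(X,N)})`. -/
def dInfLoc (M : MartingaleSpace Ω) (X : ℝ≥0 → Ω → EReal) (Y Z : ℝ≥0 → Ω → EReal) :
    EReal :=
  ∑' N : ℕ, (((1 / 2 : ℝ) ^ (N + 1) : ℝ) : EReal) *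
    upperExp M (fun t ω =>
      ((⨆ s ∈ Icc (0 : ℝ≥0) (stopMin (hitting X ((N : ℝ) + 1)) t ω),
        (Y s ω - Z s ω).abs : ℝ≥0∞) : EReal))

/-- The approximating stopping times `τ^m_n` for a càdlàg integrand `G`:
`τ^m_0 = 0`, `τ^m_{n+1} = inf{t > τ^m_n : |G_t − G_{τ^m_n}| ≥ 2^{-m}}`. -/
def approxTimes (G : ℝ≥0 → Ω → ℝ) (m : ℕ) : ℕ → Ω → ℝ≥0∞
  | 0 => fun _ => 0
  | n + 1 => fun ω =>
      ⨅ t ∈ {t : ℝ≥0 | approxTimes G m n ω < (t : ℝ≥0∞) ∧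
        ((2 : ℝ) ^ m)⁻¹ ≤ |G t ω - G ((approxTimes G m n ω).toNNReal) ω|}, (t : ℝ≥0∞)

/-- The approximating simple integral `(G^m · X)` where
`G^m_t = Σ_{n≥1} G_{τ^m_{n-1}} 1_{[τ^m_{n-1}, τ^m_n)}(t)`. -/
def approxInt (G : ℝ≥0 → Ω → ℝ) (X : ℝ≥0 → Ω → EReal) (m : ℕ) (t : ℝ≥0) (ω : Ω) :
    EReal :=
  ∑' n : ℕ, ((G ((approxTimes G m n ω).toNNReal) ω : ℝ) : EReal) *
    (stopVal X (approxTimes G m (n + 1)) t ω - stopVal X (approxTimes G m n) t ω)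

/-- `I` is a model-free integral `G·X`: a representative of the `d_{∞,X,loc}`-limit of the
classes of the approximating simple integrals `G^m·X`. -/
def IsModelFreeIntegral (M : MartingaleSpace Ω) (X : ℝ≥0 → Ω → EReal) (G : ℝ≥0 → Ω → ℝ)
    (I : ℝ≥0 → Ω → EReal) : Prop :=
  Tendsto (fun m => dInfLoc M X (approxInt G X m) I) atTop (𝓝 (0 : EReal))

/-- The filtration of `M` is right-continuous. -/
def RightContinuousFiltration (M : MartingaleSpace Ω) : Prop :=
  ∀ t : ℝ≥0, M.F t = ⨅ (s : ℝ≥0) (_ : t < s), M.F s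

/-- A càdlàg function on `ℝ≥0`. -/
def IsCadlag (f : ℝ≥0 → ℝ) : Prop :=
  (∀ t, ContinuousWithinAt f (Ici t) t) ∧
    ∀ t : ℝ≥0, 0 < t → ∃ l : ℝ, Tendsto f (𝓝[<] t) (𝓝 l)

/-- The truncated variation `TV^c(x,[0,t])` of a function `x : ℝ≥0 → ℝ`. -/
def truncVar (x : ℝ≥0 → ℝ) (c : ℝ) (t : ℝ≥0) : ℝ≥0∞ :=
  ⨆ (n : ℕ) (u : Fin (n + 1) → ℝ≥0) (_ : Monotone u) (_ : ∀ i, u i ≤ t),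
    ∑ i : Fin n, ENNReal.ofReal (|x (u i.succ) - x (u i.castSucc)| - c)


/-- The set where `Y` is real and continuous. -/
def goodSet (Y : ℝ≥0 → Ω → EReal) : Set (ℝ≥0 × Ω) :=
  {p : ℝ≥0 × Ω | (∃ r : ℝ, Y p.1 p.2 = (r : EReal)) ∧ ContinuousAt (fun s => Y s p.2) p.1}

/-- Bad outcomes up to time `t`. -/
def badSet (Y : ℝ≥0 → Ω → EReal) (t : ℝ≥0) : Set Ω :=
  {ω | ∃ s : ℝ≥0, s ≤ t ∧ (s, ω) ∉ goodSet Y}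

lemma bad_subset_meas (M : MartingaleSpace Ω) (hA : AssumptionA M)
    (Y : ℝ≥0 → Ω → EReal) (hcont : InstantlyEnforceable M (goodSet Y)) (t : ℝ≥0)
    (A : Set Ω) (hAN : A ⊆ badSet Y t) : MeasurableSet[M.F t] A := by
  have h := hA t {p | p ∉ goodSet Y ∧ p.2 ∈ A} (by
    obtain ⟨X, h1, h2, h3⟩ := hcont
    refine ⟨X, h1, h2, fun s ω hs => h3 s ω ?_⟩
    simp only [mem_compl_iff, mem_ofPred_eq, not_not] at hs
    exact hs.1)
  convert h using 1
  ext ω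
  constructor
  · intro hω
    obtain ⟨s, hs, hs'⟩ := hAN hω
    exact ⟨s, hs, hs', hω⟩
  · rintro ⟨s, hs, hs', hω⟩
    exact hω

lemma meas_of_eq_off_bad (M : MartingaleSpace Ω) (hA : AssumptionA M)
    (Y : ℝ≥0 → Ω → EReal) (hcont : InstantlyEnforceable M (goodSet Y)) (t : ℝ≥0)
    (P Q : Set Ω) (hQ : MeasurableSet[M.F t] Q) (h : ∀ ω, ω ∉ badSet Y t → (ω ∈ P ↔ ω ∈ Q)) :
    MeasurableSet[M.F t] P := by
  have h1 := bad_subset_meas M hA Y hcont t (P ∩ badSet Y t) inter_subset_right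
  have h2 := bad_subset_meas M hA Y hcont t (badSet Y t) subset_rfl
  have h3 : P = (P ∩ badSet Y t) ∪ (Q \ badSet Y t) := by
    ext ω
    have := h ω
    by_cases hω : ω ∈ badSet Y t <;> simp [hω, this]
  rw [h3]
  exact MeasurableSet.union h1 (MeasurableSet.diff hQ h2)

lemma exists_mod (M : MartingaleSpace Ω) (hA : AssumptionA M)
    (Y : ℝ≥0 → Ω → EReal) (hadapted : ∀ t, Measurable[M.F t] (Y t))
    (hcont : InstantlyEnforceable M (goodSet Y)) (t : ℝ≥0) :
    ∃ Z : ℝ≥0 → Ω → ℝ, (∀ s, Measurable[M.F t] (Z s)) ∧ (∀ ω, Continuous fun s => Z s ω) ∧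
      (∀ ω, ω ∉ badSet Y t → ∀ s, s ≤ t → Y s ω = (Z s ω : EReal)) ∧
      (∀ ω s, t ≤ s → Z s ω = Z t ω) := by
  classical
  have hN := bad_subset_meas M hA Y hcont t (badSet Y t) subset_rfl
  refine ⟨fun s ω => if ω ∈ badSet Y t then 0 else (Y (min s t) ω).toReal, ?_, ?_, ?_, ?_⟩
  · intro s
    refine Measurable.ite hN measurable_const ?_
    have : Measurable[M.F t] (Y (min s t)) :=
      (hadapted (min s t)).mono (M.mono (min_le_right _ _)) le_rfl
    exact this.ereal_toReal
  · intro ω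
    by_cases hω : ω ∈ badSet Y t
    · simp only [hω, if_true]; exact continuous_const
    · simp only [hω, if_false]
      rw [continuous_iff_continuousAt]
      intro s
      have hg : (min s t, ω) ∈ goodSet Y := by
        by_contra hc
        exact hω ⟨_, min_le_right _ _, hc⟩
      obtain ⟨⟨r, hr⟩, hc⟩ := hg
      simp only at hr hc
      have h1 : ContinuousAt EReal.toReal (Y (min s t) ω) := by
        rw [hr]
        exact EReal.tendsto_toReal (EReal.coe_ne_top r) (EReal.coe_ne_bot r)
      have h2 : ContinuousAt (fun u : ℝ≥0 => min u t) s :=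
        (continuous_id.min continuous_const).continuousAt
      have h3 : ContinuousAt (fun u => Y (min u t) ω) s :=
        ContinuousAt.comp (f := fun u : ℝ≥0 => min u t) (g := fun u => Y u ω) hc h2
      exact ContinuousAt.comp (f := fun u => Y (min u t) ω) (g := EReal.toReal) h1 h3
  · intro ω hω s hs
    simp only [hω, if_false, min_eq_left hs]
    have hg : (s, ω) ∈ goodSet Y := by
      by_contra hc
      exact hω ⟨_, hs, hc⟩
    obtain ⟨⟨r, hr⟩, -⟩ := hg
    simp only at hr
    rw [hr, EReal.toReal_coe]
  · intro ω s hs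
    simp [hs]

lemma stopMin_meas (M : MartingaleSpace Ω) (τ : Ω → ℝ≥0∞) (hτ : M.IsStoppingTime τ) (t : ℝ≥0) :
    Measurable[M.F t] (stopMin τ t) := by
  let _ := M.F t
  refine measurable_of_Iic fun a => ?_
  have : stopMin τ t ⁻¹' Iic a = if t ≤ a then univ else {ω | τ ω ≤ (a : ℝ≥0∞)} := by
    ext ω
    have h1 : stopMin τ t ω ≤ a ↔ min (τ ω) (t : ℝ≥0∞) ≤ a := by
      unfold stopMin
      rw [← ENNReal.coe_le_coe, ENNReal.coe_toNNReal (by simp)]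
    simp only [mem_preimage, mem_Iic, h1, min_le_iff, ENNReal.coe_le_coe]
    split_ifs with h <;> simp [h]
  rw [this]
  split_ifs with h
  · exact MeasurableSet.univ
  · exact M.mono (le_of_not_ge h) _ (hτ a)

lemma toNNReal_le_aux {a : ℝ≥0∞} {t : ℝ≥0} (h : a ≤ t) : a.toNNReal ≤ t := by
  rw [← ENNReal.coe_le_coe, ENNReal.coe_toNNReal (ne_top_of_le_ne_top (by simp) h)]
  exact h

lemma stopMin_eq (τ : Ω → ℝ≥0∞) (t : ℝ≥0) (ω : Ω) (h : τ ω ≤ t) :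
    stopMin τ t ω = (τ ω).toNNReal := by
  unfold stopMin
  rw [min_eq_left h]

lemma joint_meas (m : MeasurableSpace Ω) (Z : ℝ≥0 → Ω → ℝ) (hZ : ∀ s, Measurable (Z s))
    (hc : ∀ ω, Continuous fun s => Z s ω) (u : Ω → ℝ≥0) (hu : Measurable u) :
    Measurable fun ω => Z (u ω) ω := by
  have h := measurable_uncurry_of_continuous_of_measurable (u := Z) hc hZ
  exact h.comp (hu.prodMk measurable_id)

lemma hit_part1 (M : MartingaleSpace Ω) (hA : AssumptionA M)
    (Y : ℝ≥0 → Ω → EReal) (hadapted : ∀ t, Measurable[M.F t] (Y t))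
    (hcont : InstantlyEnforceable M (goodSet Y))
    (τ : Ω → ℝ≥0∞) (hτ : M.IsStoppingTime τ) (F : Set ℝ) (hF : IsClosed F) :
    M.IsStoppingTime (fun ω =>
      ⨅ t ∈ {t : ℝ≥0 | τ ω ≤ (t : ℝ≥0∞) ∧ ∃ r ∈ F, Y t ω = (r : EReal)}, (t : ℝ≥0∞)) := by
  intro t
  obtain ⟨Z, hZm, hZc, hZY, hZt⟩ := exists_mod M hA Y hadapted hcont t
  have hsm := stopMin_meas M τ hτ t
  refine meas_of_eq_off_bad M hA Y hcont t _
    ({ω | τ ω ≤ (t : ℝ≥0∞)} ∩ {ω | ⨅ n : ℕ, Metric.infEDist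
      (Z (max (TopologicalSpace.denseSeq ℝ≥0 n) (stopMin τ t ω)) ω) F = 0}) ?_ ?_
  · refine MeasurableSet.inter (hτ t) ?_
    let _ := M.F t
    have : Measurable fun ω => ⨅ n : ℕ, Metric.infEDist
      (Z (max (TopologicalSpace.denseSeq ℝ≥0 n) (stopMin τ t ω)) ω) F := by
      refine Measurable.iInf fun n => ?_
      refine (Metric.continuous_infEDist).measurable.comp ?_
      exact joint_meas (M.F t) Z hZm hZc _ (measurable_const.max hsm)
    exact this (measurableSet_singleton 0)
  · intro ω hω
    simp only [mem_inter_iff, mem_ofPred_eq]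
    have hWc : Continuous fun s : ℝ≥0 =>
        Metric.infEDist (Z (max s (stopMin τ t ω)) ω) F :=
      Metric.continuous_infEDist.comp ((hZc ω).comp (continuous_id.max continuous_const))
    constructor
    · intro hle
      have hτt : τ ω ≤ t := by
        refine le_trans (le_iInf₂ fun s hs => ?_) hle
        exact hs.1
      refine ⟨hτt, ?_⟩
      obtain ⟨s, hst, hτs, r, hrF, hr⟩ : ∃ s ≤ t, τ ω ≤ (s : ℝ≥0∞) ∧ ∃ r ∈ F, Y s ω = (r : EReal) := by
        by_contra hno
        push Not at hno
        have hg : (t, ω) ∈ goodSet Y := by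
          by_contra hc
          exact hω ⟨_, le_rfl, hc⟩
        obtain ⟨⟨r, hr⟩, hc⟩ := hg
        simp only at hr hc
        have hrF : r ∉ F := fun h => hno t le_rfl hτt r h hr
        have hnh : ((fun x : ℝ => (x : EReal)) '' Fᶜ) ∈ 𝓝 (Y t ω) := by
          rw [hr]
          exact (EReal.isOpenEmbedding_coe.isOpenMap _ hF.isOpen_compl).mem_nhds ⟨r, hrF, rfl⟩
        have hev := hc.eventually hnh
        obtain ⟨b, hb, hb'⟩ := (mem_nhdsGE_iff_exists_Ico_subset (a := t)).1
          (mem_nhdsWithin_of_mem_nhds hev)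
        have : (b : ℝ≥0∞) ≤ t := by
          refine le_trans (le_iInf₂ fun s hs => ?_) hle
          obtain ⟨hs1, r', hr'F, hr'⟩ := hs
          by_contra hsb
          have hsb : s < b := by simpa using hsb
          have hts : t < s := by
            by_contra hh
            exact hno s (not_lt.1 hh) hs1 r' hr'F hr'
          obtain ⟨x, hxF, hx⟩ := hb' ⟨hts.le, hsb⟩
          simp only at hx
          rw [hr'] at hx
          exact hxF (by rw [EReal.coe_eq_coe_iff.1 hx]; exact hr'F)
        exact absurd (mem_Ioi.1 hb) (not_lt.2 (by exact_mod_cast this))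
      have hsle : stopMin τ t ω ≤ s := by
        rw [stopMin_eq _ _ _ hτt]
        exact toNNReal_le_aux hτs
      have hW0 : Metric.infEDist (Z (max s (stopMin τ t ω)) ω) F = 0 := by
        rw [max_eq_left hsle]
        have := hZY ω hω s hst
        rw [hr] at this
        rw [← EReal.coe_eq_coe_iff.1 this]
        exact Metric.infEDist_zero_of_mem hrF
      by_contra hne
      have hpos := pos_iff_ne_zero.2 hne
      have hopen : IsOpen {s : ℝ≥0 | Metric.infEDist (Z (max s (stopMin τ t ω)) ω) F <
          ⨅ n : ℕ, Metric.infEDist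
            (Z (max (TopologicalSpace.denseSeq ℝ≥0 n) (stopMin τ t ω)) ω) F} :=
        isOpen_lt hWc continuous_const
      obtain ⟨n, hn⟩ := (TopologicalSpace.denseRange_denseSeq ℝ≥0).exists_mem_open hopen
        ⟨s, by simpa only [mem_ofPred_eq, hW0] using hpos⟩
      rw [mem_ofPred_eq] at hn
      exact absurd hn (not_lt.2 (iInf_le (fun n : ℕ => Metric.infEDist
        (Z (max (TopologicalSpace.denseSeq ℝ≥0 n) (stopMin τ t ω)) ω) F) n))
    · rintro ⟨hτt, hinf⟩
      obtain ⟨s, hs, hmin⟩ := (isCompact_Icc (a := (0 : ℝ≥0)) (b := t)).exists_isMinOn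
        ⟨0, by simp⟩ hWc.continuousOn
      have h0 : Metric.infEDist (Z (max s (stopMin τ t ω)) ω) F = 0 := by
        refine le_antisymm ?_ bot_le
        rw [← hinf]
        refine le_iInf fun n => ?_
        rcases le_total (TopologicalSpace.denseSeq ℝ≥0 n) t with h | h
        · exact hmin ⟨bot_le, h⟩
        · have h1 := hmin (show t ∈ Icc 0 t by simp)
          have h2 := hZt ω (max (TopologicalSpace.denseSeq ℝ≥0 n) (stopMin τ t ω))
            (le_trans h (le_max_left _ _))
          have h3 := hZt ω (max t (stopMin τ t ω)) (le_max_left _ _)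
          simp only [mem_ofPred_eq, h3] at h1
          rw [h2]
          exact h1
      have hst : stopMin τ t ω ≤ t := by
        rw [stopMin_eq _ _ _ hτt]
        exact toNNReal_le_aux hτt
      have hut : max s (stopMin τ t ω) ≤ t := max_le hs.2 hst
      have hmem : Z (max s (stopMin τ t ω)) ω ∈ F := by
        rw [← hF.closure_eq]
        exact Metric.mem_closure_iff_infEDist_zero.2 h0
      refine le_trans (iInf₂_le (max s (stopMin τ t ω)) ⟨?_, _, hmem, hZY ω hω _ hut⟩)
        (by exact_mod_cast hut)
      have : τ ω = (stopMin τ t ω : ℝ≥0∞) := by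
        rw [stopMin_eq _ _ _ hτt, ENNReal.coe_toNNReal (ne_top_of_le_ne_top (by simp) hτt)]
      rw [this]
      exact_mod_cast le_max_right _ _

lemma val_meas (M : MartingaleSpace Ω) (hA : AssumptionA M)
    (Y : ℝ≥0 → Ω → EReal) (hadapted : ∀ t, Measurable[M.F t] (Y t))
    (hcont : InstantlyEnforceable M (goodSet Y))
    (τ : Ω → ℝ≥0∞) (hτ : M.IsStoppingTime τ) (t : ℝ≥0) (I : Set ℝ) (hI : MeasurableSet I) :
    MeasurableSet[M.F t] {ω | τ ω ≤ t ∧ ∃ r ∈ I, Y ((τ ω).toNNReal) ω = (r : EReal)} := by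
  obtain ⟨Z, hZm, hZc, hZY, hZt⟩ := exists_mod M hA Y hadapted hcont t
  have hm := joint_meas (M.F t) Z hZm hZc _ (stopMin_meas M τ hτ t)
  refine meas_of_eq_off_bad M hA Y hcont t _
    ({ω | τ ω ≤ (t : ℝ≥0∞)} ∩ (fun ω => Z (stopMin τ t ω) ω) ⁻¹' I)
    (MeasurableSet.inter (hτ t) (hm hI)) ?_
  intro ω hω
  simp only [mem_inter_iff, mem_ofPred_eq, mem_preimage]
  refine and_congr_right fun hτt => ?_
  rw [stopMin_eq _ _ _ hτt, hZY ω hω _ (toNNReal_le_aux hτt)]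
  constructor
  · rintro ⟨r, hr, h⟩
    rwa [EReal.coe_eq_coe_iff.1 h]
  · intro h
    exact ⟨_, h, rfl⟩

/-- for a process `Y` with trajectories continuous w.i.e., the hitting times
`ρ(ω) = inf {t ≥ τ(ω) : Y_t ∈ F}` of a closed set `F` after a stopping time `τ` are
stopping times, and so are `σ(ω) = inf {t > τ(ω) : Y_t ∈ F ∖ {Y_{τ(ω)}}}` provided
`Y_{τ(ω)}` is an isolated point of `F` whenever `τ(ω) < +∞`. -/
theorem hittingTimes_are_stoppingTimes (M : MartingaleSpace Ω) (hA : AssumptionA M)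
    (Y : ℝ≥0 → Ω → EReal) (hadapted : ∀ t, Measurable[M.F t] (Y t))
    (hcont : InstantlyEnforceable M {p : ℝ≥0 × Ω |
      (∃ r : ℝ, Y p.1 p.2 = (r : EReal)) ∧ ContinuousAt (fun s => Y s p.2) p.1})
    (τ : Ω → ℝ≥0∞) (hτ : M.IsStoppingTime τ) (F : Set ℝ) (hF : IsClosed F) :
    M.IsStoppingTime (fun ω =>
      ⨅ t ∈ {t : ℝ≥0 | τ ω ≤ (t : ℝ≥0∞) ∧ ∃ r ∈ F, Y t ω = (r : EReal)}, (t : ℝ≥0∞)) ∧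
    ((∀ ω, τ ω ≠ ⊤ → ∃ r : ℝ, Y ((τ ω).toNNReal) ω = (r : EReal) ∧ r ∈ F ∧
        𝓝[F \ {r}] r = ⊥) →
      M.IsStoppingTime (fun ω =>
        ⨅ t ∈ {t : ℝ≥0 | τ ω < (t : ℝ≥0∞) ∧
          ∃ r ∈ F, Y t ω = (r : EReal) ∧ Y t ω ≠ Y ((τ ω).toNNReal) ω}, (t : ℝ≥0∞))) := by
  refine ⟨hit_part1 M hA Y hadapted hcont τ hτ F hF, fun hiso t => ?_⟩
  have key : {ω | (⨅ t ∈ {t : ℝ≥0 | τ ω < (t : ℝ≥0∞) ∧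
          ∃ r ∈ F, Y t ω = (r : EReal) ∧ Y t ω ≠ Y ((τ ω).toNNReal) ω}, (t : ℝ≥0∞)) ≤ t} =
      ⋃ p : {p : ℚ × ℚ // (F ∩ Ioo (p.1 : ℝ) (p.2 : ℝ)).Subsingleton},
        {ω | τ ω ≤ t ∧ ∃ r ∈ Ioo (p.1.1 : ℝ) (p.1.2 : ℝ), Y ((τ ω).toNNReal) ω = (r : EReal)} ∩
        {ω | (⨅ t ∈ {t : ℝ≥0 | τ ω ≤ (t : ℝ≥0∞) ∧
          ∃ r ∈ F \ Ioo (p.1.1 : ℝ) (p.1.2 : ℝ), Y t ω = (r : EReal)}, (t : ℝ≥0∞)) ≤ t} := by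
    ext ω
    have hset : ∀ p : {p : ℚ × ℚ // (F ∩ Ioo (p.1 : ℝ) (p.2 : ℝ)).Subsingleton},
        τ ω ≠ ⊤ → (∃ r ∈ Ioo (p.1.1 : ℝ) (p.1.2 : ℝ), Y ((τ ω).toNNReal) ω = (r : EReal)) →
        {t : ℝ≥0 | τ ω < (t : ℝ≥0∞) ∧
          ∃ r ∈ F, Y t ω = (r : EReal) ∧ Y t ω ≠ Y ((τ ω).toNNReal) ω} =
        {t : ℝ≥0 | τ ω ≤ (t : ℝ≥0∞) ∧
          ∃ r ∈ F \ Ioo (p.1.1 : ℝ) (p.1.2 : ℝ), Y t ω = (r : EReal)} := by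
      rintro ⟨⟨a, b⟩, hsub⟩ htop ⟨r, hrI, hr⟩
      obtain ⟨r', hr', hrF, -⟩ := hiso ω htop
      obtain rfl : r = r' := EReal.coe_eq_coe_iff.1 (hr.symm.trans hr')
      ext s
      constructor
      · rintro ⟨h1, x, hxF, hx, hne⟩
        refine ⟨h1.le, x, ⟨hxF, fun hxI => hne ?_⟩, hx⟩
        rw [hx, hr, hsub ⟨hxF, hxI⟩ ⟨hrF, hrI⟩]
      · rintro ⟨h1, x, ⟨hxF, hxI⟩, hx⟩
        have hxr : Y s ω ≠ Y ((τ ω).toNNReal) ω := by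
          rw [hx, hr]
          intro h
          rw [EReal.coe_eq_coe_iff.1 h] at hxI
          exact hxI hrI
        refine ⟨lt_of_le_of_ne h1 fun h => hxr ?_, x, hxF, hx, hxr⟩
        rw [h, ENNReal.toNNReal_coe]
    simp only [mem_iUnion, mem_inter_iff]
    constructor
    · intro hle
      have hτt : τ ω ≤ t := by
        refine le_trans (le_iInf₂ fun s hs => ?_) (mem_ofPred_eq ▸ hle)
        exact hs.1.le
      have htop : τ ω ≠ ⊤ := ne_top_of_le_ne_top (by simp) hτt
      obtain ⟨r, hr, hrF, hbot⟩ := hiso ω htop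
      obtain ⟨a, b, hI, hsub⟩ : ∃ a b : ℚ, r ∈ Ioo (a : ℝ) b ∧
          (F ∩ Ioo (a : ℝ) (b : ℝ)).Subsingleton := by
        have hd : (F \ {r})ᶜ ∈ 𝓝 r := by
          have h := mem_nhdsWithin_iff_eventually.1 (hbot ▸ mem_bot : (∅ : Set ℝ) ∈ 𝓝[F \ {r}] r)
          filter_upwards [h] with x hx hx'
          exact hx hx'
        obtain ⟨l, u, hlu, hlu'⟩ := mem_nhds_iff_exists_Ioo_subset.1 hd
        obtain ⟨a, ha1, ha2⟩ := exists_rat_btwn hlu.1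
        obtain ⟨b, hb1, hb2⟩ := exists_rat_btwn hlu.2
        refine ⟨a, b, ⟨ha2, hb1⟩, ?_⟩
        have hall : ∀ x ∈ F ∩ Ioo (a : ℝ) (b : ℝ), x = r := by
          rintro x ⟨hxF, hxa, hxb⟩
          by_contra hne
          exact hlu' ⟨ha1.trans hxa, hxb.trans hb2⟩ ⟨hxF, hne⟩
        intro x hx y hy
        rw [hall x hx, hall y hy]
      refine ⟨⟨(a, b), hsub⟩, ⟨hτt, r, hI, hr⟩, ?_⟩
      rw [mem_ofPred_eq] at hle ⊢
      rwa [hset ⟨(a, b), hsub⟩ htop ⟨r, hI, hr⟩] at hle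
    · rintro ⟨p, ⟨hτt, hex⟩, hle⟩
      have htop : τ ω ≠ ⊤ := ne_top_of_le_ne_top (by simp) hτt
      rw [mem_ofPred_eq] at hle ⊢
      rwa [hset p htop hex]
  rw [key]
  refine MeasurableSet.iUnion fun p => MeasurableSet.inter ?_ ?_
  · exact val_meas M hA Y hadapted hcont τ hτ t _ measurableSet_Ioo
  · exact hit_part1 M hA Y hadapted hcont τ hτ _ (hF.sdiff isOpen_Ioo) t

end ModelFreeBDG
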